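/- Let 𝔤 = 𝔰𝔩(n,ℂ) (n ≥ 2) be the special linear Lie algebra of traceless n×n complex matrices, and let e be a nilpotent element of 𝔤. Then ind 𝔫(𝔤^e) = rk 𝔤 − dim 𝔷(𝔤^e), where 𝔤^e is the centralizer of e in 𝔤, 𝔫(𝔤^e) its normalizer in 𝔤, and 𝔷(𝔤^e) the centre of 𝔤^e. -/

import Mathlib

open scoped ComplexOrder

/-- The centralizer `𝔤^e = {x ∈ 𝔤 : ⁅x, e⁆ = 0}` of an element `e`, as a Lie subalgebra. -/
def centralizer (L : Type*) [LieRing L] [LieAlgebra ℂ L] (e : L) : LieSubalgebra ℂ L where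
  carrier := {x : L | ⁅x, e⁆ = 0}
  add_mem' := fun {a b} ha hb => by
    simp only [Set.mem_setOf_eq] at *
    rw [add_lie, ha, hb, add_zero]
  zero_mem' := by simp
  smul_mem' := fun c a ha => by
    simp only [Set.mem_setOf_eq] at *
    rw [smul_lie, ha, smul_zero]
  lie_mem' := fun {a b} ha hb => by
    simp only [Set.mem_setOf_eq] at *
    simp [lie_lie, ha, hb]

/-- Membership in the centre `𝔷(𝔤^e)` of the centralizer of `e`:
`v` centralizes `e` and commutes with every element of `𝔤^e`. -/
def InCenterOfCentralizer (L : Type*) [LieRing L] [LieAlgebra ℂ L] (e v : L) : Prop :=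
  ⁅v, e⁆ = 0 ∧ ∀ y : L, ⁅y, e⁆ = 0 → ⁅v, y⁆ = 0

/-- The centre `𝔷(𝔤^e)` of the centralizer of `e`, as a subspace of `L`. -/
def zCenter (L : Type*) [LieRing L] [LieAlgebra ℂ L] (e : L) : Submodule ℂ L where
  carrier := {v : L | ⁅v, e⁆ = 0 ∧ ∀ y : L, ⁅y, e⁆ = 0 → ⁅v, y⁆ = 0}
  add_mem' := fun {a b} ha hb => ⟨by rw [add_lie, ha.1, hb.1, add_zero],
    fun y hy => by rw [add_lie, ha.2 y hy, hb.2 y hy, add_zero]⟩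
  zero_mem' := ⟨zero_lie e, fun y _ => zero_lie y⟩
  smul_mem' := fun c a ha => ⟨by rw [smul_lie, ha.1, smul_zero],
    fun y hy => by rw [smul_lie, ha.2 y hy, smul_zero]⟩

/-- Property (P) for an `sl₂`-triple `(e, h, f)`: for every nonzero `v ∈ 𝔷(𝔤^e)`, the
eigenspace `𝔷_max` of the restriction of `ad h` to `𝔷(𝔤^e)` for its largest eigenvalue is
contained in `[[f, 𝔤^e], v] = {⁅⁅f, x⁆, v⁆ : x ∈ 𝔤^e}`. -/
def PropertyP (L : Type*) [LieRing L] [LieAlgebra ℂ L] (e h f : L) : Prop :=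
  ∀ m : ℂ,
    (∃ z : L, z ≠ 0 ∧ InCenterOfCentralizer L e z ∧ ⁅h, z⁆ = m • z) →
    (∀ m' : ℂ, (∃ z : L, z ≠ 0 ∧ InCenterOfCentralizer L e z ∧ ⁅h, z⁆ = m' • z) → m' ≤ m) →
    ∀ v : L, InCenterOfCentralizer L e v → v ≠ 0 →
      ∀ z : L, InCenterOfCentralizer L e z → ⁅h, z⁆ = m • z →
        ∃ x : L, ⁅x, e⁆ = 0 ∧ ⁅⁅f, x⁆, v⁆ = z

/-- The stabilizer `{x ∈ 𝔮 : ξ(⁅x, y⁆) = 0 for all y ∈ 𝔮}` of a linear functional `ξ`. -/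
def coadStab (Q : Type*) [LieRing Q] [LieAlgebra ℂ Q] (ξ : Module.Dual ℂ Q) : Submodule ℂ Q where
  carrier := {x : Q | ∀ y : Q, ξ ⁅x, y⁆ = 0}
  add_mem' := fun {a b} ha hb y => by rw [add_lie, map_add, ha y, hb y, add_zero]
  zero_mem' := fun y => by rw [zero_lie, map_zero]
  smul_mem' := fun c a ha y => by rw [smul_lie, map_smul, ha y, smul_zero]

/-- The index of a complex Lie algebra:
`ind 𝔮 = min_{ξ ∈ 𝔮*} dim {x ∈ 𝔮 : ξ(⁅x, y⁆) = 0 for all y ∈ 𝔮}`. -/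
noncomputable def lieIndex (Q : Type*) [LieRing Q] [LieAlgebra ℂ Q] : ℕ :=
  ⨅ ξ : Module.Dual ℂ Q, Module.finrank ℂ ↥(coadStab Q ξ)

/-- A nilpotent element `e` is distinguished if the only `x ∈ 𝔤^e` such that `ad x` is a
semisimple endomorphism of `𝔤` is `x = 0`. -/
def IsDistinguished (L : Type*) [LieRing L] [LieAlgebra ℂ L] (e : L) : Prop :=
  ∀ x : L, ⁅x, e⁆ = 0 → (LieAlgebra.ad ℂ L x).IsSemisimple → x = 0

/-!
Write `𝔤 = 𝔰𝔩(V)`, let `𝔷` be the centre of `𝔤^e` and `𝔫` its normalizer. Since `ad e` maps `𝔫` into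
`𝔷` with kernel `𝔤^e`, we have `dim 𝔫 ≤ dim 𝔤^e + dim 𝔷`.

Lower bound. If `𝔭 ⊆ 𝔮`, restricting the Kirillov form of a generic functional to `𝔭` gives
`ind 𝔭 + dim 𝔭 ≤ ind 𝔮 + dim 𝔮`, hence `ind 𝔤^e ≤ ind 𝔫 + dim 𝔷`. Adding the scalars to `𝔤^e`
raises its index by one, and `ind 𝔤𝔩(V)^e ≥ ind 𝔤𝔩(V) ≥ dim V` is Vinberg's inequality
`ind 𝔮_γ ≥ ind 𝔮` with `𝔮 = 𝔤𝔩(V)` and `γ = tr (e ·)`. It comes from the pencil of Kirillov forms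
of `γ + t η`: for generic `t`, the kernel is no larger than the kernel of the form of `η` on the
stabilizer `𝔮_γ`.

Upper bound. Let `α` send `φ` to a combination, with distinct nonzero weights, of the last
coordinates of the images under `φ` of the generators of the Jordan chains of `e`. Its stabilizer
in `𝔤𝔩(V)^e` injects into `V` by evaluation at the sum of these generators. Moreover no nonzero
`z ∈ 𝔷` satisfies `α ⁅z, 𝔫⁆ = 0`: write `z = p(e)` and let `D` grade the chains, so that
`⁅D, e⁆ = e` and `⁅D, z⁆ = e p'(e)`, which is nonzero because `z` is not scalar. Then `D e ^ k`
normalizes `𝔤^e` for every `k`, and for a suitable `k` the bracket `⁅D e ^ k, z⁆ = e p'(e) e ^ k`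
is a nonzero multiple of the highest nonzero power of `e`, on which `α` does not vanish. As
`dim 𝔫 ≤ dim 𝔤^e + dim 𝔷`, the stabilizer of `α` in `𝔤^e` is larger than the one in `𝔫` by at
least `dim 𝔷`.
-/

section LinearAlgebra

variable {K E E' : Type*} [Field K] [AddCommGroup E] [Module K E] [AddCommGroup E'] [Module K E']

theorem exists_ne_zero_injective_add_smul [Infinite K] [FiniteDimensional K E] {Φ : E →ₗ[K] E'}
    (hΦ : Function.Injective Φ) (Ψ : E →ₗ[K] E') :
    ∃ t : K, t ≠ 0 ∧ Function.Injective (Φ + t • Ψ) := by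
  obtain ⟨Λ, hΛ⟩ := Φ.exists_leftInverse_of_injective (LinearMap.ker_eq_bot.2 hΦ)
  obtain ⟨μ, hμ⟩ := ((Module.End.finite_spectrum (Λ ∘ₗ Ψ)).insert 0).infinite_compl.nonempty
  obtain ⟨hμ0, hμ⟩ := not_or.1 hμ
  refine ⟨-μ⁻¹, neg_ne_zero.2 (inv_ne_zero hμ0), (injective_iff_map_eq_zero _).2 fun x hx => ?_⟩
  have hx' : x + -μ⁻¹ • Λ (Ψ x) = 0 := by
    have := congrArg Λ hx
    rwa [LinearMap.add_apply, LinearMap.smul_apply, map_add, map_smul, map_zero,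
      ← LinearMap.comp_apply Λ Φ, hΛ, LinearMap.id_apply] at this
  by_contra hne
  refine hμ (Module.End.hasEigenvalue_iff_mem_spectrum.1
    (Module.End.hasEigenvalue_of_hasEigenvector (x := x) ⟨Module.End.mem_eigenspace_iff.2 ?_, hne⟩))
  rw [neg_smul, ← sub_eq_add_neg, sub_eq_zero] at hx'
  rw [LinearMap.comp_apply, ← smul_inv_smul₀ hμ0 (Λ (Ψ x)), ← hx']

theorem exists_finrank_le_range_add_smul [Infinite K] [FiniteDimensional K E]
    [FiniteDimensional K E'] (f g : E →ₗ[K] E') {W U : Submodule K E}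
    (hW : Disjoint (LinearMap.ker f) W) (hU : U ≤ LinearMap.ker f)
    (hUg : Disjoint U ((LinearMap.range f).comap g)) :
    ∃ t : K, Module.finrank K U + Module.finrank K W ≤
      Module.finrank K (LinearMap.range (f + t • g)) := by
  let Φ : (U × W) →ₗ[K] E' := (g ∘ₗ U.subtype).coprod (f ∘ₗ W.subtype)
  let Ψ : (U × W) →ₗ[K] E' := (0 : U →ₗ[K] E').coprod (g ∘ₗ W.subtype)
  have hΦ : Function.Injective Φ := by
    refine (injective_iff_map_eq_zero _).2 fun ⟨u, w⟩ huw => ?_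
    replace huw : g u + f w = 0 := huw
    have hu : u = 0 := Subtype.ext <| Submodule.disjoint_def.1 hUg u u.2
      ⟨-w, by rw [map_neg, eq_neg_of_add_eq_zero_left huw]⟩
    rw [hu, ZeroMemClass.coe_zero, map_zero, zero_add] at huw
    exact Prod.ext hu (Subtype.ext (Submodule.disjoint_def.1 hW w huw w.2))
  obtain ⟨t, ht, hinj⟩ := exists_ne_zero_injective_add_smul hΦ Ψ
  -- Since `f` vanishes on `U`, the pencil at `(t⁻¹ • u, w)` is `Φ + t • Ψ` at `(u, w)`.
  have hrange (x : U × W) : (Φ + t • Ψ) x ∈ LinearMap.range (f + t • g) := by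
    refine ⟨t⁻¹ • x.1 + x.2, ?_⟩
    have hu : f x.1 = 0 := hU x.1.2
    simp [Φ, Ψ, hu, smul_inv_smul₀ ht, add_assoc, add_comm]
  refine ⟨t, ?_⟩
  rw [← Module.finrank_prod]
  exact LinearMap.finrank_le_finrank_of_injective (f := (Φ + t • Ψ).codRestrict _ hrange)
    fun x y hxy => hinj (congrArg Subtype.val hxy)

theorem le_finrank_ker_inf_comap_range [Infinite K] [FiniteDimensional K E]
    [FiniteDimensional K E'] (f g : E →ₗ[K] E') {d : ℕ}
    (h : ∀ t : K, d ≤ Module.finrank K (LinearMap.ker (f + t • g))) :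
    d ≤ Module.finrank K (LinearMap.ker f ⊓ (LinearMap.range f).comap g : Submodule K E) := by
  set N := LinearMap.ker f ⊓ (LinearMap.range f).comap g with hN
  obtain ⟨W, hW⟩ := (LinearMap.ker f).exists_isCompl
  obtain ⟨C, hC⟩ := N.exists_isCompl
  have hdisj : Disjoint (C ⊓ LinearMap.ker f) ((LinearMap.range f).comap g) := by
    rw [disjoint_assoc, ← hN]
    exact hC.disjoint.symm
  obtain ⟨t, ht⟩ := exists_finrank_le_range_add_smul f g hW.disjoint inf_le_right hdisj
  have hpencil := LinearMap.finrank_range_add_finrank_ker (f + t • g)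
  have hker := Submodule.finrank_add_eq_of_isCompl hW
  have hcompl := Submodule.finrank_add_eq_of_isCompl hC
  have hinf := Submodule.finrank_sup_add_finrank_inf_eq C (LinearMap.ker f)
  have hsup := Submodule.finrank_le (C ⊔ LinearMap.ker f)
  have := h t
  omega

variable (B : LinearMap.BilinForm K E) [FiniteDimensional K E]

theorem finrank_inf_orthogonal_add_finrank_le (W : Submodule K E) :
    Module.finrank K (W ⊓ B.orthogonal W : Submodule K E) + Module.finrank K W ≤
      Module.finrank K (LinearMap.ker B) + Module.finrank K E := by
  have hdim := LinearMap.BilinForm.finrank_add_finrank_orthogonal' (B := B) W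
  have hinf : Module.finrank K (W ⊓ B.orthogonal W : Submodule K E) ≤ _ :=
    Submodule.finrank_mono inf_le_right
  have hker : Module.finrank K (W ⊓ LinearMap.ker B : Submodule K E) ≤ _ :=
    Submodule.finrank_mono inf_le_right
  omega

variable {B}

theorem finrank_ker_add_finrank_le (hB : B.IsRefl) {W Z : Submodule K E}
    (hZW : Z ≤ W ⊓ B.orthogonal W) (hZ : Disjoint Z (LinearMap.ker B))
    (hdim : Module.finrank K E ≤ Module.finrank K W + Module.finrank K Z) :
    Module.finrank K (LinearMap.ker B) + Module.finrank K Z ≤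
      Module.finrank K (W ⊓ B.orthogonal W : Submodule K E) := by
  have hker (U : Submodule K E) : LinearMap.ker B ≤ B.orthogonal U := fun x hx u _ =>
    hB x u (LinearMap.congr_fun hx u)
  have hZdim := LinearMap.BilinForm.finrank_add_finrank_orthogonal' (B := B) Z
  rw [hZ.eq_bot, finrank_bot, add_zero] at hZdim
  have hWZ : W = B.orthogonal Z :=
    Submodule.eq_of_le_of_finrank_le (fun w hw z hz => hB w z ((hZW hz).2 w hw)) (by omega)
  have hle : LinearMap.ker B ⊔ Z ≤ W ⊓ B.orthogonal W :=
    sup_le (le_inf (hWZ ▸ hker Z) (hker W)) hZW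
  rw [← Submodule.finrank_sup_add_finrank_inf_eq, hZ.symm.eq_bot, finrank_bot, add_zero]
  exact Submodule.finrank_mono hle

end LinearAlgebra

section LieIndex

variable {P Q : Type*} [LieRing P] [LieAlgebra ℂ P] [LieRing Q] [LieAlgebra ℂ Q]

/-- The alternating form `(x, y) ↦ ξ ⁅x, y⁆` attached to a functional `ξ` on a Lie algebra, whose
kernel is the stabilizer of `ξ` in the coadjoint representation. -/
def kirillovForm (ξ : Module.Dual ℂ Q) : LinearMap.BilinForm ℂ Q :=
  (LieModule.toEnd ℂ Q Q : Q →ₗ[ℂ] Module.End ℂ Q).compr₂ ξ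

theorem kirillovForm_apply (ξ : Module.Dual ℂ Q) (x y : Q) : kirillovForm ξ x y = ξ ⁅x, y⁆ := rfl

theorem kirillovForm_isAlt (ξ : Module.Dual ℂ Q) : (kirillovForm ξ).IsAlt := fun x => by
  rw [kirillovForm_apply, lie_self, map_zero]

theorem kirillovForm_add_smul (ξ η : Module.Dual ℂ Q) (t : ℂ) :
    kirillovForm (ξ + t • η) = kirillovForm ξ + t • kirillovForm η := rfl

theorem ker_kirillovForm (ξ : Module.Dual ℂ Q) : LinearMap.ker (kirillovForm ξ) = coadStab Q ξ :=
  Submodule.ext fun _ => LinearMap.ext_iff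

theorem lieIndex_le (ξ : Module.Dual ℂ Q) : lieIndex Q ≤ Module.finrank ℂ (coadStab Q ξ) :=
  ciInf_le (OrderBot.bddBelow _) ξ

variable (Q) in
theorem exists_finrank_coadStab_eq_lieIndex :
    ∃ ξ : Module.Dual ℂ Q, Module.finrank ℂ (coadStab Q ξ) = lieIndex Q :=
  ciInf_mem _

theorem map_coadStab_comp (f : P →ₗ⁅ℂ⁆ Q) (ξ : Module.Dual ℂ Q) :
    (coadStab P (ξ ∘ₗ (f : P →ₗ[ℂ] Q))).map (f : P →ₗ[ℂ] Q) =
      LinearMap.range (f : P →ₗ[ℂ] Q) ⊓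
        (kirillovForm ξ).orthogonal (LinearMap.range (f : P →ₗ[ℂ] Q)) := by
  have hiff (x : P) : x ∈ coadStab P (ξ ∘ₗ (f : P →ₗ[ℂ] Q)) ↔
      f x ∈ (kirillovForm ξ).orthogonal (LinearMap.range (f : P →ₗ[ℂ] Q)) := by
    rw [LinearMap.BilinForm.mem_orthogonal_iff]
    constructor
    · rintro hx _ ⟨y, rfl⟩
      exact (kirillovForm_isAlt ξ).isRefl _ _ ((congrArg ξ (f.map_lie x y)).symm.trans (hx y))
    · intro hx y
      exact (congrArg ξ (f.map_lie x y)).trans ((kirillovForm_isAlt ξ).isRefl _ _ (hx _ ⟨y, rfl⟩))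
  ext y
  constructor
  · rintro ⟨x, hx, rfl⟩
    exact ⟨⟨x, rfl⟩, (hiff x).1 hx⟩
  · rintro ⟨⟨x, rfl⟩, hx⟩
    exact ⟨x, (hiff x).2 hx, rfl⟩

theorem finrank_coadStab_comp {f : P →ₗ⁅ℂ⁆ Q} (hf : Function.Injective f) (ξ : Module.Dual ℂ Q) :
    Module.finrank ℂ (coadStab P (ξ ∘ₗ (f : P →ₗ[ℂ] Q))) =
      Module.finrank ℂ (LinearMap.range (f : P →ₗ[ℂ] Q) ⊓
        (kirillovForm ξ).orthogonal (LinearMap.range (f : P →ₗ[ℂ] Q)) : Submodule ℂ Q) := by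
  rw [← map_coadStab_comp]
  exact (Submodule.equivMapOfInjective _ hf _).finrank_eq

theorem lieIndex_add_finrank_le_of_injective [FiniteDimensional ℂ Q] {f : P →ₗ⁅ℂ⁆ Q}
    (hf : Function.Injective f) :
    lieIndex P + Module.finrank ℂ P ≤ lieIndex Q + Module.finrank ℂ Q := by
  obtain ⟨ξ, hξ⟩ := exists_finrank_coadStab_eq_lieIndex Q
  rw [← hξ, ← ker_kirillovForm]
  refine le_trans ?_ (finrank_inf_orthogonal_add_finrank_le (kirillovForm ξ)
    (LinearMap.range (f : P →ₗ[ℂ] Q)))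
  rw [← finrank_coadStab_comp hf, LinearMap.finrank_range_of_inj hf]
  exact Nat.add_le_add_right (lieIndex_le _) _

/-- Vinberg's inequality. -/
theorem lieIndex_le_of_range_eq_coadStab [FiniteDimensional ℂ Q] {f : P →ₗ⁅ℂ⁆ Q}
    (hf : Function.Injective f) {γ : Module.Dual ℂ Q}
    (hγ : LinearMap.range (f : P →ₗ[ℂ] Q) = coadStab Q γ) : lieIndex Q ≤ lieIndex P := by
  obtain ⟨η, hη⟩ := exists_finrank_coadStab_eq_lieIndex P
  obtain ⟨ξ, rfl⟩ := LinearMap.dualMap_surjective_of_injective hf η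
  have hle : lieIndex Q ≤ Module.finrank ℂ (LinearMap.ker (kirillovForm γ) ⊓
      (LinearMap.range (kirillovForm γ)).comap (kirillovForm ξ) : Submodule ℂ Q) := by
    refine le_finrank_ker_inf_comap_range _ _ fun t => ?_
    rw [← kirillovForm_add_smul, ker_kirillovForm]
    exact lieIndex_le _
  rw [← hη]
  refine hle.trans ((Submodule.finrank_mono ?_).trans_eq (finrank_coadStab_comp hf ξ).symm)
  rw [hγ, ← ker_kirillovForm]
  rintro x ⟨hx, w, hw⟩
  refine ⟨hx, fun y hy => (kirillovForm_isAlt ξ).isRefl _ _ ?_⟩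
  rw [← hw]
  exact (kirillovForm_isAlt γ).isRefl _ _ (LinearMap.congr_fun hy w)

section CentralExtension

variable {f : P →ₗ⁅ℂ⁆ Q} {ζ : Q}

theorem finrank_coadStab_eq_add_one_of_central [FiniteDimensional ℂ Q]
    (hf : Function.Injective f) (hζ : ∀ x : Q, ⁅ζ, x⁆ = 0) (hζ0 : ζ ≠ 0)
    (hcompl : IsCompl (LinearMap.range (f : P →ₗ[ℂ] Q)) (ℂ ∙ ζ)) (ξ : Module.Dual ℂ Q) :
    Module.finrank ℂ (coadStab Q ξ) =
      Module.finrank ℂ (coadStab P (ξ ∘ₗ (f : P →ₗ[ℂ] Q))) + 1 := by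
  set R := LinearMap.range (f : P →ₗ[ℂ] Q) with hR
  have hspan : (ℂ ∙ ζ) ≤ coadStab Q ξ := (Submodule.span_singleton_le_iff_mem ..).2 fun y => by
    rw [hζ, map_zero]
  have hinf : coadStab Q ξ ⊓ R = R ⊓ (kirillovForm ξ).orthogonal R := by
    ext x
    refine ⟨fun hx => ⟨hx.2, fun y _ => (kirillovForm_isAlt ξ).isRefl _ _ (hx.1 y)⟩,
      fun hx => ⟨fun y => ?_, hx.1⟩⟩
    obtain ⟨r, hr, s, hs, rfl⟩ :=
      Submodule.mem_sup.1 (hcompl.sup_eq_top.ge (Submodule.mem_top (x := y)))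
    have hxs : kirillovForm ξ x s = 0 := (kirillovForm_isAlt ξ).isRefl _ _ (hspan hs x)
    have hxr : kirillovForm ξ x r = 0 := (kirillovForm_isAlt ξ).isRefl _ _ (hx.2 r hr)
    rw [lie_add, map_add, ← kirillovForm_apply, ← kirillovForm_apply, hxr, hxs, add_zero]
  have hsup : coadStab Q ξ ⊓ R ⊔ (ℂ ∙ ζ) = coadStab Q ξ := by
    rw [inf_sup_assoc_of_le _ hspan, hcompl.sup_eq_top, inf_top_eq]
  have hdisj : coadStab Q ξ ⊓ R ⊓ (ℂ ∙ ζ) = ⊥ := (hcompl.disjoint.mono_left inf_le_right).eq_bot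
  have hdim := Submodule.finrank_sup_add_finrank_inf_eq (coadStab Q ξ ⊓ R) (ℂ ∙ ζ)
  rwa [hsup, hdisj, finrank_bot, add_zero, finrank_span_singleton hζ0, hinf, hR,
    ← finrank_coadStab_comp hf] at hdim

theorem lieIndex_eq_add_one_of_central [FiniteDimensional ℂ Q]
    (hf : Function.Injective f) (hζ : ∀ x : Q, ⁅ζ, x⁆ = 0) (hζ0 : ζ ≠ 0)
    (hcompl : IsCompl (LinearMap.range (f : P →ₗ[ℂ] Q)) (ℂ ∙ ζ)) :
    lieIndex Q = lieIndex P + 1 := by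
  have hdim := finrank_coadStab_eq_add_one_of_central hf hζ hζ0 hcompl
  apply le_antisymm
  · obtain ⟨η, hη⟩ := exists_finrank_coadStab_eq_lieIndex P
    obtain ⟨ξ, rfl⟩ := LinearMap.dualMap_surjective_of_injective hf η
    exact hη ▸ hdim ξ ▸ lieIndex_le ξ
  · obtain ⟨ξ, hξ⟩ := exists_finrank_coadStab_eq_lieIndex Q
    rw [← hξ, hdim]
    exact Nat.add_le_add_right (lieIndex_le _) _

end CentralExtension

end LieIndex

section Normalizer

variable {L : Type*} [LieRing L] [LieAlgebra ℂ L] {e : L}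

theorem mem_centralizer_iff {x : L} : x ∈ centralizer L e ↔ ⁅x, e⁆ = 0 := Iff.rfl

theorem mem_zCenter_iff {z : L} : z ∈ zCenter L e ↔ ∀ y ∈ centralizer L e, ⁅z, y⁆ = 0 :=
  ⟨fun h => h.2, fun h => ⟨h e (lie_self e), h⟩⟩

theorem mem_normalizer_centralizer_iff {x : L} :
    x ∈ (centralizer L e).normalizer ↔ ⁅x, e⁆ ∈ zCenter L e := by
  rw [LieSubalgebra.mem_normalizer_iff, mem_zCenter_iff]
  refine forall₂_congr fun y hy => ?_
  rw [mem_centralizer_iff, lie_lie, mem_centralizer_iff.1 hy, lie_zero, zero_sub, ← lie_skew,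
    neg_neg]

theorem zCenter_le_centralizer : zCenter L e ≤ (centralizer L e).toSubmodule := fun _ hz => hz.1

variable [FiniteDimensional ℂ L]

variable (e) in
theorem finrank_normalizer_centralizer_le :
    Module.finrank ℂ (centralizer L e).normalizer ≤
      Module.finrank ℂ (centralizer L e) + Module.finrank ℂ (zCenter L e) := by
  let T : (centralizer L e).normalizer →ₗ[ℂ] zCenter L e :=
    ((LieModule.toEnd ℂ L L : L →ₗ[ℂ] Module.End ℂ L).flip e).restrict
      (p := (centralizer L e).normalizer.toSubmodule)
      fun _ hx => mem_normalizer_centralizer_iff.1 hx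
  have hker : Module.finrank ℂ (LinearMap.ker T) ≤ Module.finrank ℂ (centralizer L e) := by
    refine (Submodule.finrank_map_subtype_eq _ (LinearMap.ker T)).symm.trans_le
      (Submodule.finrank_mono ?_)
    rintro _ ⟨x, hx, rfl⟩
    exact congrArg Subtype.val hx
  have hrange := Submodule.finrank_le (LinearMap.range T)
  have hT := LinearMap.finrank_range_add_finrank_ker T
  omega

variable (e) in
theorem lieIndex_centralizer_le :
    lieIndex (centralizer L e) ≤
      lieIndex (centralizer L e).normalizer + Module.finrank ℂ (zCenter L e) := by
  have hindex := lieIndex_add_finrank_le_of_injective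
    (LieSubalgebra.inclusion_injective (centralizer L e).le_normalizer)
  have hdim := finrank_normalizer_centralizer_le e
  omega

theorem lieIndex_normalizer_add_finrank_zCenter_le
    {ξ : Module.Dual ℂ (centralizer L e).normalizer}
    (hξ : ∀ z : (centralizer L e).normalizer, (z : L) ∈ zCenter L e → (∀ y, ξ ⁅z, y⁆ = 0) → z = 0) :
    lieIndex (centralizer L e).normalizer + Module.finrank ℂ (zCenter L e) ≤
      Module.finrank ℂ (coadStab (centralizer L e)
        (ξ ∘ₗ (LieSubalgebra.inclusion (centralizer L e).le_normalizer :
          centralizer L e →ₗ[ℂ] (centralizer L e).normalizer))) := by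
  let N := (centralizer L e).normalizer
  have hinj := LieSubalgebra.inclusion_injective (centralizer L e).le_normalizer
  have hZ : Module.finrank ℂ ((zCenter L e).comap N.toSubmodule.subtype) =
      Module.finrank ℂ (zCenter L e) :=
    (Submodule.comapSubtypeEquivOfLe
      (zCenter_le_centralizer.trans (centralizer L e).le_normalizer)).finrank_eq
  refine (Nat.add_le_add_right (lieIndex_le ξ) _).trans ?_
  rw [finrank_coadStab_comp hinj, ← ker_kirillovForm, ← hZ]
  refine finrank_ker_add_finrank_le (kirillovForm_isAlt ξ).isRefl
    (fun z hz => ⟨⟨⟨z, zCenter_le_centralizer hz⟩, rfl⟩, ?_⟩) ?_ ?_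
  · rintro _ ⟨y, rfl⟩
    refine (kirillovForm_isAlt ξ).isRefl _ _ ((congrArg ξ (Subtype.ext ?_)).trans ξ.map_zero)
    exact mem_zCenter_iff.1 hz y y.2
  · exact Submodule.disjoint_def.2 fun z hz hker => hξ z hz (LinearMap.congr_fun hker)
  · rw [LinearMap.finrank_range_of_inj hinj]
    exact (finrank_normalizer_centralizer_le e).trans_eq (congrArg _ hZ.symm)

end Normalizer

section EndIndex

attribute [local instance] LieRing.ofAssociativeRing

section Field

variable {K V : Type*} [Field K] [AddCommGroup V] [Module K V] [FiniteDimensional K V]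

open Polynomial in
theorem finrank_le_finrank_centralizer (a : Module.End K V) :
    Module.finrank K V ≤ Module.finrank K (Subalgebra.centralizer K {a}) := by
  classical
  obtain ⟨ι, _, p, -, k, ⟨E⟩⟩ := Module.equiv_directSum_of_isTorsion
    (R := K[X]) (M := Module.AEval' a) (Module.AEval.isTorsion_of_finiteDimensional ..)
  let S := Π i, (K[X] ⧸ Ideal.span {p i ^ k i})
  let F : Module.AEval' a ≃ₗ[K[X]] S := E.trans (DirectSum.linearEquivFunOnFintype _ _ _)
  let G : V ≃ₗ[K] S := (Module.AEval'.of a).trans (F.restrictScalars K)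
  have hG (v : V) : G (a v) = (X : K[X]) • G v := by
    change F (Module.AEval'.of a (a v)) = (X : K[X]) • F (Module.AEval'.of a v)
    rw [← Module.AEval'.X_smul_of, map_smul]
  let Φ : S →ₗ[K] Module.End K V := G.symm.conj.toLinearMap ∘ₗ LinearMap.mul K S
  have hΦ (s : S) (v : V) : G (Φ s v) = s * G v := G.apply_symm_apply _
  have hmem (s : S) : Φ s ∈ Subalgebra.centralizer K {a} := by
    refine (Subalgebra.mem_centralizer_iff K).2 fun _ ha => LinearMap.ext fun v => G.injective ?_
    rw [Set.mem_singleton_iff.1 ha, Module.End.mul_apply, Module.End.mul_apply, hG, hΦ, hΦ, hG,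
      mul_smul_comm]
  rw [G.finrank_eq]
  refine LinearMap.finrank_le_finrank_of_injective
    (f := Φ.codRestrict (Subalgebra.toSubmodule (Subalgebra.centralizer K {a})) hmem)
    fun s t hst => ?_
  have hst' : Φ s = Φ t := congrArg Subtype.val hst
  rw [← mul_one s, ← mul_one t, ← G.apply_symm_apply 1, ← hΦ, ← hΦ, hst']

theorem traceForm_end_injective :
    Function.Injective (LieModule.traceForm K (Module.End K V) V) := by
  refine (injective_iff_map_eq_zero _).2 fun a ha => LinearMap.ext fun v => ?_
  refine (Module.forall_dual_apply_eq_zero_iff K _).1 fun f => ?_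
  have : LinearMap.trace K V (a ∘ₗ f.smulRight v) = 0 := LinearMap.congr_fun ha (f.smulRight v)
  rwa [show a ∘ₗ f.smulRight v = f.smulRight (a v) from LinearMap.ext fun w => map_smul a _ _,
    LinearMap.trace_smulRight] at this

end Field

variable {V : Type*} [AddCommGroup V] [Module ℂ V]

theorem mem_centralizer_end_iff {a x : Module.End ℂ V} :
    x ∈ centralizer (Module.End ℂ V) a ↔ Commute x a := commute_iff_lie_eq.symm

variable [FiniteDimensional ℂ V]

theorem coadStab_traceForm (a : Module.End ℂ V) :
    coadStab (Module.End ℂ V) (LieModule.traceForm ℂ (Module.End ℂ V) V a) =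
      (centralizer (Module.End ℂ V) a).toSubmodule := by
  ext x
  have hx : x ∈ coadStab (Module.End ℂ V) (LieModule.traceForm ℂ (Module.End ℂ V) V a) ↔
      LieModule.traceForm ℂ (Module.End ℂ V) V ⁅a, x⁆ = 0 := by
    refine Iff.trans (forall_congr' fun y => ?_) LinearMap.ext_iff.symm
    rw [← LieModule.traceForm_apply_lie_apply, LinearMap.zero_apply]
  rw [hx, map_eq_zero_iff _ traceForm_end_injective, ← lie_skew, neg_eq_zero]
  exact Iff.rfl

variable (V) in
theorem finrank_le_lieIndex_end : Module.finrank ℂ V ≤ lieIndex (Module.End ℂ V) := by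
  obtain ⟨ξ, hξ⟩ := exists_finrank_coadStab_eq_lieIndex (Module.End ℂ V)
  have hsurj : Function.Surjective (LieModule.traceForm ℂ (Module.End ℂ V) V) :=
    (LinearMap.injective_iff_surjective_of_finrank_eq_finrank Subspace.dual_finrank_eq.symm).1
      traceForm_end_injective
  obtain ⟨a, rfl⟩ := hsurj ξ
  rw [← hξ, coadStab_traceForm]
  refine (finrank_le_finrank_centralizer a).trans
    (Submodule.finrank_mono (s := (Subalgebra.centralizer ℂ {a}).toSubmodule) fun x hx => ?_)
  exact mem_centralizer_end_iff.2 ((Subalgebra.mem_centralizer_iff ℂ).1 hx a rfl).symm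

theorem finrank_le_lieIndex_centralizer_end (a : Module.End ℂ V) :
    Module.finrank ℂ V ≤ lieIndex (centralizer (Module.End ℂ V) a) := by
  have hrange : LinearMap.range ((centralizer (Module.End ℂ V) a).incl :
      centralizer (Module.End ℂ V) a →ₗ[ℂ] Module.End ℂ V) =
      coadStab (Module.End ℂ V) (LieModule.traceForm ℂ (Module.End ℂ V) V a) := by
    rw [coadStab_traceForm]
    exact Submodule.range_subtype _
  exact (finrank_le_lieIndex_end V).trans
    (lieIndex_le_of_range_eq_coadStab Subtype.val_injective hrange)

end EndIndex

section GradedPolynomial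

open Polynomial

theorem commute_aeval {R A : Type*} [CommSemiring R] [Ring A] [Algebra R A] {a b : A}
    (h : Commute b a) (p : R[X]) : Commute b (aeval a p) :=
  Algebra.commute_of_mem_adjoin_singleton_of_commute (aeval_mem_adjoin_singleton R a) h

theorem mul_pow_sub_pow_mul_of_mul_sub_mul_eq {A : Type*} [Ring A] {D e : A}
    (h : D * e - e * D = e) (k : ℕ) : D * e ^ k - e ^ k * D = k • e ^ k := by
  induction k with
  | zero => rw [pow_zero, mul_one, one_mul, sub_self, zero_smul]
  | succ k ih =>
    calc D * e ^ (k + 1) - e ^ (k + 1) * D =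
        (D * e ^ k - e ^ k * D) * e + e ^ k * (D * e - e * D) := by rw [pow_succ]; noncomm_ring
      _ = (k + 1) • e ^ (k + 1) := by rw [ih, h, smul_mul_assoc, ← pow_succ, succ_nsmul]

theorem mul_aeval_sub_aeval_mul {R A : Type*} [CommRing R] [Ring A] [Algebra R A] {D e : A}
    (h : D * e - e * D = e) (p : R[X]) :
    D * aeval e p - aeval e p * D = aeval e (X * derivative p) := by
  induction p using Polynomial.induction_on' with
  | add p q hp hq =>
    rw [derivative_add, mul_add, map_add, map_add, ← hp, ← hq]
    noncomm_ring
  | monomial k r =>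
    rw [aeval_monomial, ← Algebra.smul_def, mul_smul_comm, smul_mul_assoc, ← smul_sub,
      mul_pow_sub_pow_mul_of_mul_sub_mul_eq h, derivative_monomial, X_mul_monomial, aeval_monomial,
      ← Algebra.smul_def, mul_smul, Nat.cast_smul_eq_nsmul]
    cases k with
    | zero => simp
    | succ k => rfl

variable {K : Type*} [Field K]

theorem exists_aeval_mul_pow_eq_smul_pow {A : Type*} [Ring A] [Algebra K A] {e : A} {m : ℕ}
    (he : e ^ (m + 1) = 0) {q : K[X]} (hq : aeval e q ≠ 0) :
    ∃ (k : ℕ) (c : K), c ≠ 0 ∧ aeval e q * e ^ k = c • e ^ m := by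
  have hq0 : q ≠ 0 := fun h => hq (by rw [h, map_zero])
  obtain ⟨r, hqr, hr⟩ := exists_eq_pow_rootMultiplicity_mul_and_not_dvd q hq0 0
  rw [map_zero, sub_zero] at hqr hr
  rw [X_dvd_iff] at hr
  generalize rootMultiplicity 0 q = j at hqr
  subst hqr
  have hj : j ≤ m := by
    by_contra hj
    exact hq (by rw [map_mul, map_pow, aeval_X, pow_eq_zero_of_le (by lia) he, zero_mul])
  refine ⟨m - j, r.coeff 0, hr, ?_⟩
  calc aeval e (X ^ j * r) * e ^ (m - j) = aeval e (X ^ j * r * X ^ (m - j)) := by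
        rw [map_mul _ (X ^ j * r), map_pow _ X (m - j), aeval_X]
    _ = aeval e (X ^ (m + 1) * divX r + r.coeff 0 • X ^ m) := by
        conv_lhs => rw [← divX_mul_X_add r, mul_right_comm, ← pow_add, Nat.add_sub_cancel' hj]
        rw [smul_eq_C_mul]
        ring_nf
    _ = r.coeff 0 • e ^ m := by
        rw [map_add, map_mul, map_pow, aeval_X, he, zero_mul, zero_add, map_smul, map_pow, aeval_X]

theorem exists_minpoly_eq_X_pow {A : Type*} [Ring A] [Algebra K A] {e : A} (he : IsNilpotent e) :
    ∃ M, minpoly K e = X ^ M := by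
  obtain ⟨N, hN⟩ := he
  have hint : IsIntegral K e := ⟨X ^ N, monic_X_pow N, by rw [← aeval_def, map_pow, aeval_X, hN]⟩
  obtain ⟨M, -, hM⟩ := (dvd_prime_pow prime_X N).1
    (minpoly.dvd K e (by rw [map_pow, aeval_X, hN] : aeval e (X ^ N : K[X]) = 0))
  exact ⟨M, eq_of_monic_of_associated (minpoly.monic hint) (monic_X_pow M) hM⟩

theorem aeval_eq_algebraMap_of_aeval_X_mul_derivative_eq_zero [CharZero K] {A : Type*} [Ring A]
    [Algebra K A] {e : A} (he : IsNilpotent e) {p : K[X]} (hp : aeval e (X * derivative p) = 0) :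
    aeval e p = algebraMap K A (p.coeff 0) := by
  obtain ⟨M, hM⟩ := exists_minpoly_eq_X_pow (K := K) he
  rw [← minpoly.dvd_iff, hM, X_pow_dvd_iff] at hp
  rw [← sub_eq_zero, ← aeval_C, ← map_sub, ← minpoly.dvd_iff, hM, X_pow_dvd_iff]
  rintro (_ | d) hd
  · rw [coeff_sub, coeff_C_zero, sub_self]
  · have hcoeff := hp (d + 1) hd
    rw [coeff_X_mul, coeff_derivative] at hcoeff
    rw [coeff_sub, coeff_C_succ, sub_zero]
    exact (mul_eq_zero.1 hcoeff).resolve_right (Nat.cast_add_one_ne_zero d)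

end GradedPolynomial

section JordanBasis

variable {K V : Type*} [Field K] [AddCommGroup V] [Module K V] {e : Module.End K V}

/-- A basis of `V` made of finitely many Jordan chains `v, e v, e² v, …, e^(length - 1) v` of the
nilpotent endomorphism `e`. Chains of length `0` are allowed. -/
structure JordanBasis (e : Module.End K V) where
  numChains : ℕ
  length : Fin numChains → ℕ
  gen : Fin numChains → V
  basis : Module.Basis (Σ i, Fin (length i)) K V
  basis_apply : ∀ i s, basis ⟨i, s⟩ = (e ^ (s : ℕ)) (gen i)
  pow_length_gen : ∀ i, (e ^ length i) (gen i) = 0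

open Polynomial in
theorem nonempty_jordanBasis [FiniteDimensional K V] (he : IsNilpotent e) :
    Nonempty (JordanBasis e) := by
  classical
  have htors : Module.IsTorsion' (Module.AEval' e) (Submonoid.powers (X : K[X])) := by
    obtain ⟨N, hN⟩ := he
    intro x
    obtain ⟨v, rfl⟩ := (Module.AEval'.of e).surjective x
    refine ⟨⟨X ^ N, N, rfl⟩, ?_⟩
    change (X ^ N : K[X]) • Module.AEval'.of e v = 0
    rw [Module.AEval'.X_pow_smul_of, hN, zero_smul, map_zero]
  obtain ⟨d, k, ⟨E⟩⟩ := Module.torsion_by_prime_power_decomposition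
    (R := K[X]) (M := Module.AEval' e) (p := X) irreducible_X htors
  let S (i : Fin d) := K[X] ⧸ Ideal.span {(X : K[X]) ^ k i}
  let F : Module.AEval' e ≃ₗ[K[X]] Π i, S i := E.trans (DirectSum.linearEquivFunOnFintype _ _ _)
  let G : V ≃ₗ[K] Π i, S i := (Module.AEval'.of e).trans (F.restrictScalars K)
  have hG (n : ℕ) (s : Π i, S i) : (e ^ n) (G.symm s) = G.symm ((X ^ n : K[X]) • s) := by
    refine G.injective (Eq.trans ?_ (G.apply_symm_apply _).symm)
    change F (Module.AEval'.of e ((e ^ n) (G.symm s))) = _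
    rw [← Module.End.smul_def, ← Module.AEval'.X_pow_smul_of, map_smul]
    exact congrArg _ (G.apply_symm_apply s)
  let pb (i : Fin d) : PowerBasis K (S i) := AdjoinRoot.powerBasis' (monic_X_pow (k i))
  have hX (i : Fin d) (n : ℕ) : (X ^ n : K[X]) • (1 : S i) = (pb i).gen ^ n := by
    change Ideal.Quotient.mk _ (X ^ n * 1) = Ideal.Quotient.mk _ X ^ n
    rw [mul_one, map_pow]
  refine ⟨⟨d, fun i => (pb i).dim, fun i => G.symm (Pi.single i 1),
    (Pi.basis fun i => (pb i).basis).map G.symm, fun i s => ?_, fun i => ?_⟩⟩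
  · rw [hG, ← Pi.single_smul, hX, Module.Basis.map_apply, Pi.basis_apply, PowerBasis.basis_eq_pow]
  · have hdim : (pb i).dim = k i := natDegree_X_pow _
    have hgen : (X ^ k i : K[X]) • (1 : S i) = 0 := by
      change Ideal.Quotient.mk _ (X ^ k i * 1) = 0
      rw [mul_one, Ideal.Quotient.mk_singleton_self]
    rw [hG, ← Pi.single_smul, hdim, hgen, Pi.single_zero, map_zero]

namespace JordanBasis

variable (J : JordanBasis e)

/-- The coordinate of a vector along `e ^ t` applied to the `j`-th generator; it is `0` when `t`
exceeds the length of the chain. -/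
noncomputable def coord (j : Fin J.numChains) (t : ℕ) : Module.Dual K V :=
  if h : t < J.length j then J.basis.coord ⟨j, t, h⟩ else 0

theorem coord_eq_zero {j : Fin J.numChains} {t : ℕ} (h : J.length j ≤ t) : J.coord j t = 0 :=
  dif_neg h.not_gt

theorem pow_gen_eq_zero {i : Fin J.numChains} {s : ℕ} (h : J.length i ≤ s) :
    (e ^ s) (J.gen i) = 0 :=
  Module.End.pow_map_zero_of_le h (J.pow_length_gen i)

theorem coord_pow_gen (i j : Fin J.numChains) (s t : ℕ) :
    J.coord j t ((e ^ s) (J.gen i)) = if i = j ∧ s = t ∧ s < J.length i then 1 else 0 := by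
  by_cases hs : s < J.length i
  · by_cases ht : t < J.length j
    · have hbasis : (e ^ s) (J.gen i) = J.basis ⟨i, s, hs⟩ := (J.basis_apply i ⟨s, hs⟩).symm
      rw [coord, dif_pos ht, hbasis, Module.Basis.coord_apply, Module.Basis.repr_self,
        Finsupp.single_apply]
      refine if_congr ?_ rfl rfl
      rw [Sigma.mk.injEq]
      grind
    · rw [J.coord_eq_zero (not_lt.1 ht), LinearMap.zero_apply, if_neg (by grind)]
  · rw [J.pow_gen_eq_zero (not_lt.1 hs), map_zero, if_neg (by tauto)]

theorem hom_ext {W : Type*} [AddCommGroup W] [Module K W] {f g : V →ₗ[K] W}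
    (h : ∀ i s, f ((e ^ s) (J.gen i)) = g ((e ^ s) (J.gen i))) : f = g :=
  J.basis.ext fun ⟨i, s⟩ => by rw [J.basis_apply, h]

theorem ext_of_commute {φ ψ : Module.End K V} (hφ : Commute φ e) (hψ : Commute ψ e)
    (h : ∀ i, φ (J.gen i) = ψ (J.gen i)) : φ = ψ :=
  J.hom_ext fun i s => by
    rw [← Module.End.mul_apply, ← Module.End.mul_apply, (hφ.pow_right s).eq, (hψ.pow_right s).eq,
      Module.End.mul_apply, Module.End.mul_apply, h]

theorem eq_zero_of_coord {x : V} (h : ∀ j, ∀ t < J.length j, J.coord j t x = 0) : x = 0 :=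
  J.basis.forall_coord_eq_zero_iff.1 fun ⟨j, t⟩ => by
    simpa only [coord, dif_pos t.2] using h j t t.2

theorem coord_pow_apply (r : ℕ) (j : Fin J.numChains) (t : ℕ) (x : V) :
    J.coord j t ((e ^ r) x) = if r ≤ t ∧ t < J.length j then J.coord j (t - r) x else 0 := by
  have hcomp : J.coord j t ∘ₗ (e ^ r) =
      if r ≤ t ∧ t < J.length j then J.coord j (t - r) else 0 := by
    refine J.hom_ext fun i s => ?_
    rw [LinearMap.comp_apply, ← Module.End.mul_apply, ← pow_add, coord_pow_gen]
    split_ifs with h1 h2 h2 <;> simp only [coord_pow_gen, LinearMap.zero_apply] <;> grind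
  rw [← LinearMap.comp_apply, hcomp]
  split_ifs <;> rfl

/-- The endomorphism sending the `j`-th generator to `v` and killing the other chains. It commutes
with `e` as soon as `e ^ J.length j` kills `v`. -/
noncomputable def chainMap (j : Fin J.numChains) (v : V) : Module.End K V :=
  ∑ t ∈ Finset.range (J.length j), (J.coord j t).smulRight ((e ^ t) v)

theorem chainMap_apply (j : Fin J.numChains) (v x : V) :
    J.chainMap j v x = ∑ t ∈ Finset.range (J.length j), J.coord j t x • (e ^ t) v := by
  simp only [chainMap, LinearMap.sum_apply, LinearMap.smulRight_apply]

theorem chainMap_pow_gen {j : Fin J.numChains} {v : V} (hv : (e ^ J.length j) v = 0)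
    (i : Fin J.numChains) (s : ℕ) :
    J.chainMap j v ((e ^ s) (J.gen i)) = if i = j then (e ^ s) v else 0 := by
  simp only [chainMap_apply, coord_pow_gen, ite_smul, one_smul, zero_smul]
  split_ifs with hij
  · subst hij
    by_cases hs : s < J.length i
    · rw [Finset.sum_eq_single s] <;> grind
    · rw [Module.End.pow_map_zero_of_le (not_lt.1 hs) hv]
      exact Finset.sum_eq_zero fun t _ => if_neg (by tauto)
  · exact Finset.sum_eq_zero fun t _ => if_neg (by tauto)

theorem chainMap_gen {j : Fin J.numChains} {v : V} (hv : (e ^ J.length j) v = 0)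
    (i : Fin J.numChains) : J.chainMap j v (J.gen i) = if i = j then v else 0 :=
  J.chainMap_pow_gen hv i 0

theorem commute_chainMap {j : Fin J.numChains} {v : V} (hv : (e ^ J.length j) v = 0) :
    Commute (J.chainMap j v) e := by
  refine J.hom_ext fun i s => ?_
  have hsucc (w : V) : e ((e ^ s) w) = (e ^ (s + 1)) w := by rw [pow_succ', Module.End.mul_apply]
  rw [Module.End.mul_apply, Module.End.mul_apply, hsucc, J.chainMap_pow_gen hv,
    J.chainMap_pow_gen hv, apply_ite e, map_zero, hsucc]

theorem pow_length_pow_gen {i j : Fin J.numChains} {r : ℕ} (h : J.length i ≤ J.length j + r) :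
    (e ^ J.length j) ((e ^ r) (J.gen i)) = 0 := by
  rw [← Module.End.mul_apply, ← pow_add, J.pow_gen_eq_zero h]

theorem coord_chainMap_pow_gen {i j : Fin J.numChains} {r : ℕ}
    (h : J.length i ≤ J.length j + r) (a : Fin J.numChains) (t : ℕ) (x : V) :
    J.coord a t (J.chainMap j ((e ^ r) (J.gen i)) x) =
      if a = i ∧ r ≤ t ∧ t < J.length i then J.coord j (t - r) x else 0 := by
  have hcomp : J.coord a t ∘ₗ J.chainMap j ((e ^ r) (J.gen i)) =
      if a = i ∧ r ≤ t ∧ t < J.length i then J.coord j (t - r) else 0 := by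
    refine J.hom_ext fun b s => ?_
    rw [LinearMap.comp_apply, J.chainMap_pow_gen (J.pow_length_pow_gen h),
      ← Module.End.mul_apply, ← pow_add]
    split_ifs <;> simp only [coord_pow_gen, LinearMap.zero_apply, map_zero] <;> grind
  rw [← LinearMap.comp_apply, hcomp]
  split_ifs <;> rfl

theorem exists_mul_sub_mul_eq (J : JordanBasis e) : ∃ D : Module.End K V, D * e - e * D = e := by
  let D : Module.End K V := J.basis.constr K fun b => (b.2 : K) • J.basis b
  have hD (i : Fin J.numChains) (s : ℕ) :
      D ((e ^ s) (J.gen i)) = (s : K) • (e ^ s) (J.gen i) := by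
    by_cases hs : s < J.length i
    · have hbasis : (e ^ s) (J.gen i) = J.basis ⟨i, s, hs⟩ := (J.basis_apply i ⟨s, hs⟩).symm
      rw [hbasis, Module.Basis.constr_basis]
    · rw [J.pow_gen_eq_zero (not_lt.1 hs), map_zero, smul_zero]
  refine ⟨D, J.hom_ext fun i s => ?_⟩
  have hsucc : e ((e ^ s) (J.gen i)) = (e ^ (s + 1)) (J.gen i) := by
    rw [pow_succ', Module.End.mul_apply]
  rw [LinearMap.sub_apply, Module.End.mul_apply, Module.End.mul_apply, hD, map_smul, hsucc, hD,
    ← sub_smul, Nat.cast_succ, add_sub_cancel_left, one_smul]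

theorem exists_forall_length_le [Nontrivial V] :
    ∃ i, (∀ j, J.length j ≤ J.length i) ∧ 0 < J.length i := by
  obtain ⟨j, t⟩ := J.basis.index_nonempty
  have : Nonempty (Fin J.numChains) := ⟨j⟩
  obtain ⟨i, hi⟩ := Finite.exists_max J.length
  exact ⟨i, hi, (Nat.zero_le t).trans_lt (t.2.trans_le (hi j))⟩

variable {i : Fin J.numChains} (hi : ∀ j, J.length j ≤ J.length i)
include hi

theorem pow_length_eq_zero : e ^ J.length i = 0 :=
  J.hom_ext fun j s => by
    rw [← Module.End.mul_apply, ← pow_add, LinearMap.zero_apply,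
      J.pow_gen_eq_zero ((hi j).trans (Nat.le_add_right _ _))]

open Polynomial in
theorem exists_eq_aeval_of_commute {z : Module.End K V} (hz : ∀ ψ, Commute ψ e → Commute z ψ) :
    ∃ p : K[X], z = aeval e p := by
  have hgen (j : Fin J.numChains) : (e ^ J.length i) (J.gen j) = 0 := J.pow_gen_eq_zero (hi j)
  refine ⟨∑ t ∈ Finset.range (J.length i), C (J.coord i t (z (J.gen i))) * X ^ t,
    J.ext_of_commute (hz e (Commute.refl e)) (commute_aeval (Commute.refl e) _).symm fun j => ?_⟩
  calc z (J.gen j) = z (J.chainMap i (J.gen j) (J.gen i)) := by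
        rw [J.chainMap_gen (hgen j), if_pos rfl]
    _ = J.chainMap i (J.gen j) (z (J.gen i)) :=
        LinearMap.congr_fun (hz _ (J.commute_chainMap (hgen j))).eq (J.gen i)
    _ = _ := by
        simp only [chainMap_apply, map_sum, map_mul, aeval_C, map_pow, aeval_X,
          LinearMap.sum_apply, Module.End.mul_apply, Module.algebraMap_end_apply]

end JordanBasis

theorem eq_zero_of_mul_shift_eq_mul_shift {u v : K} (hu : u ≠ 0) (hv : v ≠ 0) (huv : u ≠ v)
    {f : ℕ → K} {p q : ℕ}
    (h : ∀ r, p ≤ q + r → (v * if r < q then f (q - 1 - r) else 0) =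
      u * if r < p then f (p - 1 - r) else 0)
    (s : ℕ) (hs : s < q) : f s = 0 := by
  induction s using Nat.strong_induction_on with
  | _ s ih =>
  rcases lt_trichotomy p q with hlt | rfl | hgt
  · have hr := h (q - 1 - s) (by lia)
    have hshift : (if q - 1 - s < p then f (p - 1 - (q - 1 - s)) else 0) = 0 :=
      ite_eq_right_iff.2 fun _ => ih _ (by lia) (by lia)
    rw [hshift, mul_zero, if_pos (by lia), show q - 1 - (q - 1 - s) = s by lia] at hr
    exact (mul_eq_zero.1 hr).resolve_left hv
  · have hr := h (p - 1 - s) (by lia)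
    rw [if_pos (by lia), show p - 1 - (p - 1 - s) = s by lia] at hr
    by_contra hfs
    exact huv (mul_right_cancel₀ hfs hr).symm
  · have hr := h (p - 1 - s) (by lia)
    have hshift : (if p - 1 - s < q then f (q - 1 - (p - 1 - s)) else 0) = 0 :=
      ite_eq_right_iff.2 fun _ => ih _ (by lia) (by lia)
    rw [hshift, mul_zero, if_pos (by lia), show p - 1 - (p - 1 - s) = s by lia] at hr
    exact (mul_eq_zero.1 hr.symm).resolve_left hu

namespace JordanBasis

variable (J : JordanBasis e)

/-- The functional `φ ↦ ∑ i, (i + 1) * c i`, where `c i` is the coefficient of the last vector of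
the `i`-th chain in the image under `φ` of its generator. The only role of the weights `i + 1` is
to be nonzero and pairwise distinct in characteristic `0`. -/
noncomputable def functional : Module.Dual K (Module.End K V) :=
  ∑ i : Fin J.numChains,
    ((i : ℕ) + 1 : K) • (J.coord i (J.length i - 1) ∘ₗ LinearMap.applyₗ (J.gen i))

theorem functional_apply (φ : Module.End K V) : J.functional φ =
    ∑ i : Fin J.numChains, ((i : ℕ) + 1 : K) * J.coord i (J.length i - 1) (φ (J.gen i)) := by
  simp only [functional, LinearMap.sum_apply, LinearMap.smul_apply, LinearMap.comp_apply,
    LinearMap.applyₗ_apply_apply, smul_eq_mul]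

theorem functional_mul_chainMap {φ : Module.End K V} (hφ : Commute φ e) {i j : Fin J.numChains}
    {r : ℕ} (h : J.length i ≤ J.length j + r) :
    J.functional (φ * J.chainMap j ((e ^ r) (J.gen i))) =
      ((j : ℕ) + 1 : K) *
        if r < J.length j then J.coord j (J.length j - 1 - r) (φ (J.gen i)) else 0 := by
  have hgen := J.chainMap_gen (J.pow_length_pow_gen h)
  have hpow : φ ((e ^ r) (J.gen i)) = (e ^ r) (φ (J.gen i)) :=
    LinearMap.congr_fun (hφ.pow_right r).eq _
  rw [functional_apply, Finset.sum_eq_single_of_mem j (Finset.mem_univ j) fun a _ ha => by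
    rw [Module.End.mul_apply, hgen, if_neg ha, map_zero, map_zero, mul_zero]]
  rw [Module.End.mul_apply, hgen, if_pos rfl, hpow, coord_pow_apply]
  exact congrArg _ (if_congr (by lia) rfl rfl)

theorem functional_chainMap_mul (φ : Module.End K V) {i j : Fin J.numChains} {r : ℕ}
    (h : J.length i ≤ J.length j + r) :
    J.functional (J.chainMap j ((e ^ r) (J.gen i)) * φ) =
      ((i : ℕ) + 1 : K) *
        if r < J.length i then J.coord j (J.length i - 1 - r) (φ (J.gen i)) else 0 := by
  rw [functional_apply, Finset.sum_eq_single_of_mem i (Finset.mem_univ i) fun a _ ha => by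
    rw [Module.End.mul_apply, J.coord_chainMap_pow_gen h, if_neg fun hc => ha hc.1, mul_zero]]
  rw [Module.End.mul_apply, J.coord_chainMap_pow_gen h]
  exact congrArg _ (if_congr (by lia) rfl rfl)

variable [CharZero K]

theorem functional_pow_ne_zero {i : Fin J.numChains} (hpos : 0 < J.length i) :
    J.functional (e ^ (J.length i - 1)) ≠ 0 := by
  have hsum : J.functional (e ^ (J.length i - 1)) =
      ((∑ j : Fin J.numChains, if J.length j = J.length i then (j : ℕ) + 1 else 0 : ℕ) : K) := by
    rw [functional_apply, Nat.cast_sum]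
    refine Finset.sum_congr rfl fun j _ => ?_
    rw [coord_pow_gen, mul_ite, mul_one, mul_zero, Nat.cast_ite, Nat.cast_succ, Nat.cast_zero]
    exact if_congr (by grind) rfl rfl
  rw [hsum, Nat.cast_ne_zero, ← Nat.pos_iff_ne_zero]
  exact Finset.sum_pos' (fun _ _ => Nat.zero_le _)
    ⟨i, Finset.mem_univ i, by rw [if_pos rfl]; exact Nat.succ_pos _⟩

variable {φ : Module.End K V} (hφ : Commute φ e)
  (hswap : ∀ ψ, Commute ψ e → J.functional (φ * ψ) = J.functional (ψ * φ))
include hφ hswap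

theorem coord_apply_gen_eq_zero_of_functional_mul_comm {i j : Fin J.numChains} (hij : i ≠ j)
    {s : ℕ} (hs : s < J.length j) : J.coord j s (φ (J.gen i)) = 0 := by
  have hne : ((i : ℕ) + 1 : K) ≠ ((j : ℕ) + 1 : K) := fun h =>
    hij (Fin.ext (Nat.succ_injective (by exact_mod_cast h)))
  refine eq_zero_of_mul_shift_eq_mul_shift (f := fun s => J.coord j s (φ (J.gen i)))
    (p := J.length i)
    (Nat.cast_add_one_ne_zero _) (Nat.cast_add_one_ne_zero _) hne (fun r hr => ?_) s hs
  rw [← J.functional_mul_chainMap hφ hr, ← J.functional_chainMap_mul φ hr]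
  exact hswap _ (J.commute_chainMap (J.pow_length_pow_gen hr))

theorem eq_zero_of_functional_mul_comm (hsum : φ (∑ i, J.gen i) = 0) : φ = 0 := by
  refine J.ext_of_commute hφ (Commute.zero_left e) fun i => J.eq_zero_of_coord fun j s hs => ?_
  by_cases hij : i = j
  · subst hij
    have hcoord := congrArg (J.coord i s) hsum
    rwa [map_sum, map_sum, map_zero, Finset.sum_eq_single_of_mem i (Finset.mem_univ i) fun a _ ha =>
      J.coord_apply_gen_eq_zero_of_functional_mul_comm hφ hswap ha hs] at hcoord
  · exact J.coord_apply_gen_eq_zero_of_functional_mul_comm hφ hswap hij hs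

end JordanBasis

end JordanBasis

section JordanBasisComplex

attribute [local instance] LieRing.ofAssociativeRing

variable {V : Type*} [AddCommGroup V] [Module ℂ V] [FiniteDimensional ℂ V] {e : Module.End ℂ V}

theorem JordanBasis.finrank_coadStab_functional_le (J : JordanBasis e) :
    Module.finrank ℂ (coadStab (centralizer (Module.End ℂ V) e)
      (J.functional ∘ₗ ((centralizer (Module.End ℂ V) e).incl : _ →ₗ[ℂ] Module.End ℂ V))) ≤
      Module.finrank ℂ V := by
  let N := coadStab (centralizer (Module.End ℂ V) e)
    (J.functional ∘ₗ ((centralizer (Module.End ℂ V) e).incl : _ →ₗ[ℂ] Module.End ℂ V))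
  let T : N →ₗ[ℂ] V := LinearMap.applyₗ (∑ i, J.gen i) ∘ₗ
    (centralizer (Module.End ℂ V) e).toSubmodule.subtype ∘ₗ N.subtype
  refine LinearMap.finrank_le_finrank_of_injective (f := T)
    ((injective_iff_map_eq_zero T).2 fun φ hT => Subtype.ext (Subtype.ext ?_))
  refine J.eq_zero_of_functional_mul_comm (mem_centralizer_end_iff.1 φ.1.2) (fun ψ hψ => ?_) hT
  have hbracket : J.functional (φ.1.1 * ψ - ψ * φ.1.1) = 0 :=
    φ.2 ⟨ψ, mem_centralizer_end_iff.2 hψ⟩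
  rwa [map_sub, sub_eq_zero] at hbracket

end JordanBasisComplex

section NilpotentAd

attribute [local instance] LieRing.ofAssociativeRing

theorem exists_isNilpotent_sub_algebraMap {K V : Type*} [Field K] [PerfectField K]
    [AddCommGroup V] [Module K V] [FiniteDimensional K V] {a : Module.End K V}
    (ha : IsNilpotent (LieAlgebra.ad K (Module.End K V) a)) :
    ∃ μ : K, IsNilpotent (a - algebraMap K (Module.End K V) μ) := by
  obtain ⟨ν, hν, s, hs, hνnil, hsss, has⟩ := a.exists_isNilpotent_isSemisimple
  have hcomm : Commute a ν := Algebra.commute_of_mem_adjoin_self hν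
  have had : LieAlgebra.ad K (Module.End K V) s =
      LieAlgebra.ad K (Module.End K V) a - LieAlgebra.ad K (Module.End K V) ν := by
    rw [← map_sub, has, add_sub_cancel_left]
  have hs0 : LieAlgebra.ad K (Module.End K V) s = 0 := by
    refine Module.End.eq_zero_of_isNilpotent_isSemisimple ?_
      (LieAlgebra.ad_isSemisimple_of_isSemisimple hsss)
    rw [had]
    exact (LieAlgebra.commute_ad_of_commute hcomm).isNilpotent_sub ha
      (LieAlgebra.ad_nilpotent_of_nilpotent hνnil)
  have hscalar : s ∈ (⊥ : Subalgebra K (Module.End K V)) := by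
    rw [← Algebra.IsCentral.center_eq_bot K (Module.End K V), Subalgebra.mem_center_iff]
    exact fun b => (sub_eq_zero.1 (LinearMap.congr_fun hs0 b)).symm
  obtain ⟨μ, rfl⟩ := Algebra.mem_bot.1 hscalar
  exact ⟨μ, by rwa [has, add_sub_cancel_right]⟩

end NilpotentAd

section Pairing

variable {K V : Type*} [Field K] [CharZero K] [AddCommGroup V] [Module K V]
  [FiniteDimensional K V] [Nontrivial V]

theorem eq_zero_of_trace_algebraMap_eq_zero {c : K}
    (h : LinearMap.trace K V (algebraMap K (Module.End K V) c) = 0) : c = 0 := by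
  rw [Algebra.algebraMap_eq_smul_one, map_smul, LinearMap.trace_one, smul_eq_mul] at h
  exact (mul_eq_zero.1 h).resolve_right (Nat.cast_ne_zero.2 Module.finrank_pos.ne')

open Polynomial in
theorem JordanBasis.exists_functional_mul_sub_mul_ne_zero {e z : Module.End K V}
    (J : JordanBasis e) (hz : ∀ ψ, Commute ψ e → Commute z ψ) (hz0 : z ≠ 0)
    (htr : LinearMap.trace K V z = 0) :
    ∃ (y : Module.End K V) (k : ℕ), y * e - e * y = e ^ k ∧ J.functional (z * y - y * z) ≠ 0 := by
  obtain ⟨i, hi, hpos⟩ := J.exists_forall_length_le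
  obtain ⟨p, rfl⟩ := J.exists_eq_aeval_of_commute hi hz
  obtain ⟨D, hD⟩ := J.exists_mul_sub_mul_eq
  obtain ⟨m, hm⟩ := Nat.exists_eq_succ_of_ne_zero hpos.ne'
  have hem : e ^ (m + 1) = 0 := by rw [← Nat.succ_eq_add_one, ← hm, J.pow_length_eq_zero hi]
  have hq : aeval e (X * derivative p) ≠ 0 := fun hq => hz0 <| by
    have hscalar := aeval_eq_algebraMap_of_aeval_X_mul_derivative_eq_zero ⟨m + 1, hem⟩ hq
    rw [hscalar] at htr ⊢
    rw [eq_zero_of_trace_algebraMap_eq_zero htr, map_zero]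
  obtain ⟨k, c, hc, hk⟩ := exists_aeval_mul_pow_eq_smul_pow hem hq
  refine ⟨D * e ^ k, k + 1, ?_, ?_⟩
  · calc D * e ^ k * e - e * (D * e ^ k) = (D * e - e * D) * e ^ k := by
          rw [mul_assoc, ← pow_succ, pow_succ', sub_mul, mul_assoc, mul_assoc]
      _ = e ^ (k + 1) := by rw [hD, pow_succ']
  · have hpk : aeval e p * e ^ k = e ^ k * aeval e p :=
      (commute_aeval ((Commute.refl e).pow_left k) p).symm
    have hbracket : aeval e p * (D * e ^ k) - D * e ^ k * aeval e p = -(c • e ^ m) := by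
      rw [← hk, ← mul_aeval_sub_aeval_mul hD, mul_assoc D, ← hpk]
      noncomm_ring
    rw [hbracket, map_neg, map_smul, neg_ne_zero]
    refine smul_ne_zero hc ?_
    rw [← Nat.succ_sub_one m, ← hm]
    exact J.functional_pow_ne_zero hpos

end Pairing

section SpecialLinear

attribute [local instance] LieRing.ofAssociativeRing

/-- The Lie algebra morphism `f` identifies `L` with `𝔰𝔩(V)`, the traceless endomorphisms of `V`. -/
structure IsSpecialLinear {L V : Type*} [LieRing L] [LieAlgebra ℂ L] [AddCommGroup V] [Module ℂ V]
    (f : L →ₗ⁅ℂ⁆ Module.End ℂ V) : Prop where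
  injective : Function.Injective f
  range_eq : LinearMap.range (f : L →ₗ[ℂ] Module.End ℂ V) = LinearMap.ker (LinearMap.trace ℂ V)

/-- The morphism `𝔤^e → 𝔥^(f e)` of centralizers induced by a Lie algebra morphism `f : 𝔤 → 𝔥`. -/
def centralizerMap {L M : Type*} [LieRing L] [LieAlgebra ℂ L] [LieRing M] [LieAlgebra ℂ M]
    (f : L →ₗ⁅ℂ⁆ M) (e : L) : centralizer L e →ₗ⁅ℂ⁆ centralizer M (f e) where
  toLinearMap := (f : L →ₗ[ℂ] M).restrict (p := (centralizer L e).toSubmodule)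
    (q := (centralizer M (f e)).toSubmodule) fun x hx => by
      rw [LieSubalgebra.mem_toSubmodule, mem_centralizer_iff] at hx ⊢
      rw [LieHom.coe_toLinearMap, ← LieHom.map_lie, hx, map_zero]
  map_lie' := Subtype.ext (LieHom.map_lie f _ _)

namespace IsSpecialLinear

variable {L V : Type*} [LieRing L] [LieAlgebra ℂ L] [AddCommGroup V] [Module ℂ V]
  {f : L →ₗ⁅ℂ⁆ Module.End ℂ V} (hf : IsSpecialLinear f) {e : L}
include hf

theorem trace_apply (x : L) : LinearMap.trace ℂ V (f x) = 0 :=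
  LinearMap.mem_ker.1 (hf.range_eq ▸ LinearMap.mem_range_self (f : L →ₗ[ℂ] Module.End ℂ V) x)

theorem commute_apply_iff {x y : L} : Commute (f x) (f y) ↔ ⁅x, y⁆ = 0 := by
  rw [commute_iff_lie_eq, ← LieHom.map_lie, map_eq_zero_iff f hf.injective]

open Polynomial in
theorem mem_normalizer_centralizer {y : L} {p : ℂ[X]} (hy : ⁅f y, f e⁆ = aeval (f e) p) :
    y ∈ (centralizer L e).normalizer := by
  refine mem_normalizer_centralizer_iff.2 (mem_zCenter_iff.2 fun w hw => ?_)
  rw [← hf.commute_apply_iff, LieHom.map_lie, hy]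
  exact (commute_aeval (hf.commute_apply_iff.2 hw) p).symm

variable [FiniteDimensional ℂ V]

theorem finiteDimensional : FiniteDimensional ℂ L :=
  Module.Finite.of_injective (f : L →ₗ[ℂ] Module.End ℂ V) hf.injective

variable [Nontrivial V]

theorem exists_eq_add_algebraMap (φ : Module.End ℂ V) : ∃ x c, φ = f x + algebraMap ℂ _ c := by
  let c := LinearMap.trace ℂ V φ / Module.finrank ℂ V
  have hmem : φ - algebraMap ℂ _ c ∈ LinearMap.range (f : L →ₗ[ℂ] Module.End ℂ V) := by
    rw [hf.range_eq, LinearMap.mem_ker, map_sub, Algebra.algebraMap_eq_smul_one, map_smul,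
      LinearMap.trace_one, smul_eq_mul,
      div_mul_cancel₀ _ (Nat.cast_ne_zero.2 Module.finrank_pos.ne'), sub_self]
  obtain ⟨x, hx⟩ := hmem
  exact ⟨x, c, sub_eq_iff_eq_add.1 hx.symm⟩

theorem isNilpotent_apply (he : IsNilpotent (LieAlgebra.ad ℂ L e)) : IsNilpotent (f e) := by
  obtain ⟨N, hN⟩ := he
  have had : IsNilpotent (LieAlgebra.ad ℂ (Module.End ℂ V) (f e)) := by
    refine ⟨N + 1, LinearMap.ext fun φ => ?_⟩
    obtain ⟨x, c, rfl⟩ := hf.exists_eq_add_algebraMap φ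
    have hcomm : (LieAlgebra.ad ℂ _ (f e)).comp (f : L →ₗ[ℂ] Module.End ℂ V) =
        (f : L →ₗ[ℂ] Module.End ℂ V).comp (LieAlgebra.ad ℂ L e) :=
      LinearMap.ext fun y => (LieHom.map_lie f e y).symm
    have hfx : LieAlgebra.ad ℂ (Module.End ℂ V) (f e) (f x + algebraMap ℂ _ c) = f ⁅e, x⁆ := by
      rw [LieAlgebra.ad_apply, lie_add, LieHom.map_lie,
        (Algebra.commute_algebraMap_right c (f e)).lie_eq, add_zero]
    rw [pow_succ, Module.End.mul_apply, hfx]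
    exact (LinearMap.congr_fun (Module.End.commute_pow_left_of_commute hcomm N) ⁅e, x⁆).trans
      (by rw [hN]; exact map_zero f)
  obtain ⟨μ, hμ⟩ := exists_isNilpotent_sub_algebraMap had
  have htr := (LinearMap.isNilpotent_trace_of_isNilpotent hμ).eq_zero
  rw [map_sub, hf.trace_apply, zero_sub, neg_eq_zero] at htr
  rwa [eq_zero_of_trace_algebraMap_eq_zero htr, map_zero, sub_zero] at hμ

theorem commute_apply_of_mem_zCenter {z : L} (hz : z ∈ zCenter L e) {ψ : Module.End ℂ V}
    (hψ : Commute ψ (f e)) : Commute (f z) ψ := by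
  obtain ⟨x, c, rfl⟩ := hf.exists_eq_add_algebraMap ψ
  have hx : Commute (f x) (f e) := by
    simpa only [add_sub_cancel_right] using hψ.sub_left (Algebra.commute_algebraMap_left c (f e))
  exact (hf.commute_apply_iff.2 (mem_zCenter_iff.1 hz x (hf.commute_apply_iff.1 hx))).add_right
    (Algebra.commute_algebraMap_right c (f z))

theorem exists_functional_lie_ne_zero (J : JordanBasis (f e)) {z : L} (hz : z ∈ zCenter L e)
    (hz0 : z ≠ 0) : ∃ y ∈ (centralizer L e).normalizer, J.functional (f ⁅z, y⁆) ≠ 0 := by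
  obtain ⟨φ, k, hφ, hne⟩ := J.exists_functional_mul_sub_mul_ne_zero
    (fun _ => hf.commute_apply_of_mem_zCenter hz) ((map_ne_zero_iff f hf.injective).2 hz0)
    (hf.trace_apply z)
  obtain ⟨y, c, rfl⟩ := hf.exists_eq_add_algebraMap φ
  rw [← Ring.lie_def, add_lie, (Algebra.commute_algebraMap_left c (f e)).lie_eq, add_zero] at hφ
  rw [← Ring.lie_def, lie_add, (Algebra.commute_algebraMap_right c (f z)).lie_eq, add_zero,
    ← LieHom.map_lie] at hne
  exact ⟨y, hf.mem_normalizer_centralizer (p := Polynomial.X ^ k)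
    (by rw [hφ, map_pow, Polynomial.aeval_X]), hne⟩

end IsSpecialLinear

theorem centralizerMap_injective {L M : Type*} [LieRing L] [LieAlgebra ℂ L] [LieRing M]
    [LieAlgebra ℂ M] {f : L →ₗ⁅ℂ⁆ M} (hf : Function.Injective f) (e : L) :
    Function.Injective (centralizerMap f e) := fun _ _ h =>
  Subtype.ext (hf (congrArg Subtype.val h))

namespace IsSpecialLinear

variable {L V : Type*} [LieRing L] [LieAlgebra ℂ L] [AddCommGroup V] [Module ℂ V]
  [FiniteDimensional ℂ V] [Nontrivial V] {f : L →ₗ⁅ℂ⁆ Module.End ℂ V} (hf : IsSpecialLinear f)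
include hf

theorem isCompl_range_centralizerMap (e : L) :
    IsCompl (LinearMap.range
        (centralizerMap f e : centralizer L e →ₗ[ℂ] centralizer (Module.End ℂ V) (f e)))
      (ℂ ∙ (⟨1, mem_centralizer_end_iff.2 (Commute.one_left _)⟩ :
        centralizer (Module.End ℂ V) (f e))) := by
  refine IsCompl.of_eq (eq_bot_iff.2 ?_) (eq_top_iff.2 fun ⟨φ, hφ⟩ _ => ?_)
  · rintro _ ⟨⟨x, rfl⟩, hx⟩
    obtain ⟨c, hc⟩ := Submodule.mem_span_singleton.1 hx
    have hfx : algebraMap ℂ (Module.End ℂ V) c = f x :=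
      (Algebra.algebraMap_eq_smul_one c).trans (congrArg Subtype.val hc)
    have hc0 := eq_zero_of_trace_algebraMap_eq_zero
      ((congrArg _ hfx).trans (hf.trace_apply x))
    exact Subtype.ext (hfx.symm.trans (by rw [hc0, map_zero]; rfl))
  · obtain ⟨x, c, rfl⟩ := hf.exists_eq_add_algebraMap φ
    have hx : Commute (f x) (f e) := by
      simpa only [add_sub_cancel_right] using
        (mem_centralizer_end_iff.1 hφ).sub_left (Algebra.commute_algebraMap_left c (f e))
    refine Submodule.mem_sup.2 ⟨_, ⟨⟨x, hf.commute_apply_iff.1 hx⟩, rfl⟩, _,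
      Submodule.smul_mem _ c (Submodule.mem_span_singleton_self _), Subtype.ext ?_⟩
    exact congrArg (f x + ·) (Algebra.algebraMap_eq_smul_one c).symm

theorem finrank_le_lieIndex_normalizer_add (e : L) :
    Module.finrank ℂ V ≤
      lieIndex (centralizer L e).normalizer + Module.finrank ℂ (zCenter L e) + 1 := by
  have := hf.finiteDimensional
  calc Module.finrank ℂ V ≤ lieIndex (centralizer (Module.End ℂ V) (f e)) :=
        finrank_le_lieIndex_centralizer_end (f e)
    _ = lieIndex (centralizer L e) + 1 :=
        lieIndex_eq_add_one_of_central (centralizerMap_injective hf.injective e)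
          (fun x => Subtype.ext (Commute.one_left x.1).lie_eq)
          (fun h => one_ne_zero (congrArg Subtype.val h)) (hf.isCompl_range_centralizerMap e)
    _ ≤ _ := Nat.add_le_add_right (lieIndex_centralizer_le e) 1

theorem lieIndex_normalizer_add_le {e : L} (he : IsNilpotent (LieAlgebra.ad ℂ L e)) :
    lieIndex (centralizer L e).normalizer + Module.finrank ℂ (zCenter L e) + 1 ≤
      Module.finrank ℂ V := by
  have := hf.finiteDimensional
  obtain ⟨J⟩ := nonempty_jordanBasis (hf.isNilpotent_apply he)
  let α : Module.Dual ℂ (centralizer (Module.End ℂ V) (f e)) :=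
    J.functional ∘ₗ ((centralizer (Module.End ℂ V) (f e)).incl : _ →ₗ[ℂ] Module.End ℂ V)
  let ξ : Module.Dual ℂ (centralizer L e).normalizer := J.functional ∘ₗ
    (f : L →ₗ[ℂ] Module.End ℂ V) ∘ₗ ((centralizer L e).normalizer.incl : _ →ₗ[ℂ] L)
  have hξ (z : (centralizer L e).normalizer) (hz : (z : L) ∈ zCenter L e)
      (hstab : ∀ y, ξ ⁅z, y⁆ = 0) : z = 0 := by
    by_contra hz0
    obtain ⟨y, hy, hne⟩ := hf.exists_functional_lie_ne_zero J hz fun h => hz0 (Subtype.ext h)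
    exact hne (hstab ⟨y, hy⟩)
  calc lieIndex (centralizer L e).normalizer + Module.finrank ℂ (zCenter L e) + 1 ≤
        Module.finrank ℂ (coadStab (centralizer L e)
          (α ∘ₗ (centralizerMap f e : centralizer L e →ₗ[ℂ] _))) + 1 :=
        Nat.add_le_add_right (lieIndex_normalizer_add_finrank_zCenter_le hξ) 1
    _ = Module.finrank ℂ (coadStab _ α) :=
        (finrank_coadStab_eq_add_one_of_central (centralizerMap_injective hf.injective e)
          (fun x => Subtype.ext (Commute.one_left x.1).lie_eq)
          (fun h => one_ne_zero (congrArg Subtype.val h))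
          (hf.isCompl_range_centralizerMap e) α).symm
    _ ≤ Module.finrank ℂ V := J.finrank_coadStab_functional_le

end IsSpecialLinear

/-- The inclusion of `𝔰𝔩(ι, ℂ)` into the endomorphisms of `ι → ℂ`. -/
noncomputable def slToEnd (ι : Type*) [Fintype ι] [DecidableEq ι] :
    LieAlgebra.SpecialLinear.sl ι ℂ →ₗ⁅ℂ⁆ Module.End ℂ (ι → ℂ) :=
  lieEquivMatrix'.symm.toLieHom.comp (LieAlgebra.SpecialLinear.sl ι ℂ).incl

theorem isSpecialLinear_slToEnd (ι : Type*) [Fintype ι] [DecidableEq ι] :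
    IsSpecialLinear (slToEnd ι) where
  injective := lieEquivMatrix'.symm.injective.comp Subtype.val_injective
  range_eq := by
    ext φ
    rw [LinearMap.mem_ker, ← Matrix.toLin'_toMatrix' φ, Matrix.trace_toLin'_eq]
    refine ⟨?_, fun hφ => ⟨⟨LinearMap.toMatrix' φ, hφ⟩, rfl⟩⟩
    rintro ⟨x, hx⟩
    rw [← Matrix.toLin'.injective hx]
    exact x.2

theorem index_normalizer_centralizer_eq_sl_general {L V : Type*} [LieRing L] [LieAlgebra ℂ L]
    [AddCommGroup V] [Module ℂ V] [FiniteDimensional ℂ V] [Nontrivial V]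
    {f : L →ₗ⁅ℂ⁆ Module.End ℂ V} (hf : IsSpecialLinear f) {e : L}
    (he : IsNilpotent (LieAlgebra.ad ℂ L e)) :
    (lieIndex (centralizer L e).normalizer : ℤ) =
      (Module.finrank ℂ V - 1) - Module.finrank ℂ (zCenter L e) := by
  have hlower := hf.finrank_le_lieIndex_normalizer_add e
  have hupper := hf.lieIndex_normalizer_add_le he
  lia

end SpecialLinear

/-- For a nilpotent element `e` of `𝔰𝔩(n, ℂ)` (`n ≥ 2`),
`ind 𝔫(𝔤^e) = rk 𝔤 − dim 𝔷(𝔤^e)`, where `rk 𝔰𝔩(n, ℂ) = n − 1`. -/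
theorem index_normalizer_centralizer_eq_sl
    (n : ℕ) (hn : 2 ≤ n)
    (e : ↥(LieAlgebra.SpecialLinear.sl (Fin n) ℂ))
    (he : IsNilpotent (LieAlgebra.ad ℂ ↥(LieAlgebra.SpecialLinear.sl (Fin n) ℂ) e)) :
    (lieIndex ↥((centralizer ↥(LieAlgebra.SpecialLinear.sl (Fin n) ℂ) e).normalizer) : ℤ) =
      ((n : ℤ) - 1) -
        (Module.finrank ℂ ↥(zCenter ↥(LieAlgebra.SpecialLinear.sl (Fin n) ℂ) e) : ℤ) := by
  have : Nonempty (Fin n) := ⟨⟨0, by lia⟩⟩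
  rw [index_normalizer_centralizer_eq_sl_general (isSpecialLinear_slToEnd (Fin n)) he,
    Module.finrank_fin_fun]
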